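/- For n ≥ 1 define A_n : ℝ → ℝ by A_n(t) := Σ_{j=1}^n 2·(−1)^{j+1}·C(n+j−1, n−j)·((2j−1)!/((j−1)!·(j+1)!))·e^{−jt}. Then A_n satisfies the second-order ordinary differential equation (1 − e^t)·Ä_n(t) + (e^t − n²)·A_n(t) = 0 for all t ∈ ℝ. -/

import Mathlib

open Finset

/-- The coefficient function `A_n(t) = ∑_{j=1}^n a(n,j) e^{-jt}` of the Löwner chain
of the Koebe function, with
`a(n,j) = 2(-1)^{j+1} C(n+j-1, n-j) (2j-1)!/((j-1)!(j+1)!)`. -/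
noncomputable def koebeA (n : ℕ) (t : ℝ) : ℝ :=
  ∑ j ∈ Icc 1 n, 2 * (-1 : ℝ) ^ (j + 1) * (Nat.choose (n + j - 1) (n - j)) *
    ((Nat.factorial (2 * j - 1) : ℝ) /
      ((Nat.factorial (j - 1) : ℝ) * (Nat.factorial (j + 1) : ℝ))) *
    Real.exp (-(j : ℝ) * t)

/-- Shifted coefficient `a(n, i+1)`. -/
noncomputable def koebeB (n i : ℕ) : ℝ :=
  2 * (-1 : ℝ) ^ (i + 1 + 1) * (Nat.choose (n + (i + 1) - 1) (n - (i + 1))) *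
    ((Nat.factorial (2 * (i + 1) - 1) : ℝ) /
      ((Nat.factorial (i + 1 - 1) : ℝ) * (Nat.factorial (i + 1 + 1) : ℝ)))

lemma koebeB_rec (n i : ℕ) (h : i + 1 < n) :
    koebeB n i * (((i : ℝ) + 1) ^ 2 - (n : ℝ) ^ 2) =
      koebeB n (i + 1) * (((i : ℝ) + 1) * ((i : ℝ) + 3)) := by
  obtain ⟨d, rfl⟩ : ∃ d, n = i + d + 2 := ⟨n - (i + 2), by omega⟩
  unfold koebeB
  have e1 : i + d + 2 + (i + 1) - 1 = (d + 1) + (2 * i + 1) := by omega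
  have e2 : i + d + 2 - (i + 1) = d + 1 := by omega
  have e3 : i + d + 2 + (i + 1 + 1) - 1 = d + (2 * i + 3) := by omega
  have e4 : i + d + 2 - (i + 1 + 1) = d := by omega
  have e5 : 2 * (i + 1) - 1 = 2 * i + 1 := by omega
  have e6 : 2 * (i + 1 + 1) - 1 = 2 * i + 3 := by omega
  rw [e1, e2, e3, e4, e5, e6, Nat.cast_add_choose, Nat.cast_add_choose]
  have e7 : d + (2 * i + 3) = (d + 1 + (2 * i + 1)) + 1 := by omega
  rw [e7, Nat.factorial_succ (d + 1 + (2 * i + 1))]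
  simp only [Nat.add_sub_cancel]
  have p1 : (Nat.factorial (d + 1 + (2 * i + 1)) : ℝ) ≠ 0 := by positivity
  have p2 : (Nat.factorial (2 * i + 1) : ℝ) ≠ 0 := by positivity
  have p3 : (Nat.factorial (2 * i + 3) : ℝ) ≠ 0 := by positivity
  have p4 : (Nat.factorial d : ℝ) ≠ 0 := by positivity
  have p5 : (Nat.factorial i : ℝ) ≠ 0 := by positivity
  have p6 : (Nat.factorial (i + 2) : ℝ) ≠ 0 := by positivity
  rw [Nat.factorial_succ d, Nat.factorial_succ i, Nat.factorial_succ (i + 1 + 1)]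
  push_cast
  generalize (Nat.factorial (d + 1 + (2 * i + 1)) : ℝ) = P1 at *
  field_simp
  ring

lemma koebeA_eq (n : ℕ) : koebeA n = fun t =>
    ∑ i ∈ range n, koebeB n i * Real.exp (-((i : ℝ) + 1) * t) := by
  funext t
  unfold koebeA
  rw [← Finset.Ico_add_one_right_eq_Icc, Finset.sum_Ico_eq_sum_range]
  apply sum_congr (by simp)
  intro i _
  rw [add_comm 1 i]
  unfold koebeB
  push_cast
  ring

lemma deriv_expsum (n : ℕ) (b : ℕ → ℝ) :
    deriv (fun t : ℝ => ∑ i ∈ range n, b i * Real.exp (-((i : ℝ) + 1) * t)) =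
    fun t => ∑ i ∈ range n, (b i * (-((i : ℝ) + 1))) * Real.exp (-((i : ℝ) + 1) * t) := by
  funext t
  apply HasDerivAt.deriv
  apply HasDerivAt.fun_sum
  intro i _
  have h := (((hasDerivAt_id t).const_mul (-((i : ℝ) + 1))).exp).const_mul (b i)
  refine HasDerivAt.congr_deriv (f := fun t : ℝ => b i * Real.exp (-((i : ℝ) + 1) * t)) h ?_
  simp only [id]
  ring

lemma koebe_tele (n m : ℕ) (hm : m + 1 ≤ n) (t : ℝ) :
    ∑ i ∈ range m, koebeB n i * ((((i : ℝ) + 1) ^ 2 - (n : ℝ) ^ 2) * Real.exp (-((i : ℝ) + 1) * t)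
      + (1 - ((i : ℝ) + 1) ^ 2) * Real.exp (-(i : ℝ) * t)) =
    koebeB n m * ((m : ℝ) * (m + 2)) * Real.exp (-(m : ℝ) * t) := by
  induction m with
  | zero => simp
  | succ m ih =>
    rw [sum_range_succ, ih (by omega)]
    have h := koebeB_rec n m (by omega)
    push_cast
    linear_combination Real.exp (-((m : ℝ) + 1) * t) * h

/-- For `n ≥ 1`, `A_n` satisfies the second order ordinary differential equation
`(1 - e^t)·Ä_n(t) + (e^t - n²)·A_n(t) = 0`. -/
theorem koebeA_ode (n : ℕ) (hn : 1 ≤ n) (t : ℝ) :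
    (1 - Real.exp t) * deriv (deriv (koebeA n)) t +
      (Real.exp t - (n : ℝ) ^ 2) * koebeA n t = 0 := by
  rw [koebeA_eq, deriv_expsum, deriv_expsum]
  have key : ∑ i ∈ range n, koebeB n i * ((((i : ℝ) + 1) ^ 2 - (n : ℝ) ^ 2) *
      Real.exp (-((i : ℝ) + 1) * t) + (1 - ((i : ℝ) + 1) ^ 2) * Real.exp (-(i : ℝ) * t)) = 0 := by
    obtain ⟨k, rfl⟩ : ∃ k, n = k + 1 := ⟨n - 1, by omega⟩
    rw [sum_range_succ, koebe_tele (k + 1) k le_rfl]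
    push_cast
    ring
  rw [← key]
  simp only [mul_sum]
  rw [← sum_add_distrib]
  apply sum_congr rfl
  intro i _
  have e : Real.exp (-(i : ℝ) * t) = Real.exp t * Real.exp (-((i : ℝ) + 1) * t) := by
    rw [← Real.exp_add]; congr 1; ring
  rw [e]
  ring
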